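/- arXiv:1511.08961 — 5 statements merged into one kernel-verified Lean document; each statement's English description precedes it below -/
import Mathlib

section
/- Let N ≥ 1 and let P be a real 2N×2N matrix (indexed by Fin N ⊕ Fin N) that is symmetric positive definite and belongs to the symplectic group Sp(2N,ℝ), i.e. P * J * Pᵀ = J. Then the unique symmetric positive-definite square root Q of P (the matrix Q with Qᵀ = Q, Q positive definite and Q * Q = P) also belongs to Sp(2N,ℝ). -/
open Matrix

/-- The unique symmetric positive-definite square root of a symmetric positive-definite
symplectic matrix is itself symplectic. -/
theorem posDef_sqrt_mem_symplecticGroup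
    (N : ℕ) (hN : 1 ≤ N)
    (P Q : Matrix (Fin N ⊕ Fin N) (Fin N ⊕ Fin N) ℝ)
    (hP : P.PosDef) (hPsp : P ∈ Matrix.symplecticGroup (Fin N) ℝ)
    (hQsymm : Qᵀ = Q) (hQ : Q.PosDef) (hQQ : Q * Q = P) :
    Q ∈ Matrix.symplecticGroup (Fin N) ℝ := by
  have hJJ : J (Fin N) ℝ * J (Fin N) ℝ = -1 := J_squared _ _
  have hPs : Pᵀ = P := by rw [← hQQ, transpose_mul, hQsymm]
  rw [SymplecticGroup.mem_iff, hPs] at hPsp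
  rw [SymplecticGroup.mem_iff, hQsymm]
  have hu : IsUnit Q.det := hQ.isUnit.map detMonoidHom
  -- the conjugate of `Q` by `J` is positive semidefinite
  have hR : (J (Fin N) ℝ * Q * (J (Fin N) ℝ)ᵀ).PosSemidef := by
    have h := hQ.posSemidef.mul_mul_conjTranspose_same (J (Fin N) ℝ)
    rwa [conjTranspose_eq_transpose_of_trivial] at h
  rw [J_transpose] at hR
  generalize J (Fin N) ℝ = K at *
  -- both `K Q Kᵀ` and `Q⁻¹` are positive square roots of `P⁻¹`
  have h1 : (K * Q * -K) * (K * Q * -K) = P⁻¹ := by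
    symm
    apply inv_eq_right_inv
    have : (K * Q * -K) * (K * Q * -K) = K * Q * (K * K) * Q * K := by noncomm_ring
    rw [this, hJJ]
    have : P * (K * Q * -1 * Q * K) = -(P * K * (Q * Q) * K) := by noncomm_ring
    rw [this, hQQ, hPsp, hJJ, neg_neg]
  have h2 : Q⁻¹ * Q⁻¹ = P⁻¹ := by rw [← hQQ, Matrix.mul_inv_rev]
  have h3 : K * Q * -K = Q⁻¹ := by
    open scoped MatrixOrder Matrix.Norms.L2Operator in
    rw [← CFC.sqrt_unique h1 hR.nonneg, ← CFC.sqrt_unique h2 hQ.posSemidef.inv.nonneg]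
  have h4 : Q * (K * Q * -K) = 1 := by rw [h3, mul_nonsing_inv _ hu]
  calc Q * K * Q = (Q * K * Q * -(K * K)) := by rw [hJJ, neg_neg, mul_one]
    _ = Q * (K * Q * -K) * K := by noncomm_ring
    _ = K := by rw [h4, one_mul]
end

section
/- Let N ≥ 1 and define r : Sp(2N,ℝ) → Sp(2N,ℝ) by r(g) := (√(g * gᵀ))⁻¹ * g, where √(g * gᵀ) is the unique symmetric positive-definite square root of the positive-definite matrix g * gᵀ. Then: (i) for every g ∈ Sp(2N,ℝ), r(g) is orthogonal and symplectic; (ii) r(u) = u for every orthogonal symplectic u; (iii) r(u₁ * g * u₂) = u₁ * r(g) * u₂ for every g ∈ Sp(2N,ℝ) and all orthogonal symplectic u₁, u₂. In other words, r is a U(N)×U(N)-equivariant retraction of Sp(2N,ℝ) onto its unitary subgroup U(N) = Sp(2N,ℝ) ∩ O(2N). -/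
open Matrix

section helpers
open scoped MatrixOrder Matrix.Norms.L2Operator

/-- Uniqueness of positive definite square roots. -/
theorem posDef_sqrt_unique {n : Type*} [Fintype n] [DecidableEq n] {A B : Matrix n n ℝ}
    (hA : A.PosDef) (hB : B.PosDef) (h : A * A = B * B) : A = B := by
  have h1 : CFC.sqrt (B * B) = A := CFC.sqrt_unique h (Matrix.nonneg_iff_posSemidef.mpr hA.posSemidef)
  have h2 : CFC.sqrt (B * B) = B := CFC.sqrt_unique rfl (Matrix.nonneg_iff_posSemidef.mpr hB.posSemidef)
  rw [← h1, h2]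

end helpers

theorem posDef_conj_real {n : Type*} [Fintype n] [DecidableEq n] {A U : Matrix n n ℝ}
    (hA : A.PosDef) (hU : IsUnit U) : (U * A * Uᵀ).PosDef := by
  have := hA.mul_mul_conjTranspose_same (B := U) (Matrix.vecMul_injective_of_isUnit hU)
  rwa [Matrix.conjTranspose_eq_transpose_of_trivial] at this

/-- The map `r(g) = (√(g gᵀ))⁻¹ g` is a `U(N) × U(N)`-equivariant retraction of
`Sp(2N, ℝ)` onto its unitary subgroup `U(N) = Sp(2N, ℝ) ∩ O(2N)`. -/
theorem symplectic_retraction_onto_unitary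
    (N : ℕ) (hN : 1 ≤ N)
    (msqrt : Matrix (Fin N ⊕ Fin N) (Fin N ⊕ Fin N) ℝ →
             Matrix (Fin N ⊕ Fin N) (Fin N ⊕ Fin N) ℝ)
    (hsqrt : ∀ P : Matrix (Fin N ⊕ Fin N) (Fin N ⊕ Fin N) ℝ,
      P.PosDef → (msqrt P).PosDef ∧ msqrt P * msqrt P = P)
    (r : Matrix (Fin N ⊕ Fin N) (Fin N ⊕ Fin N) ℝ →
         Matrix (Fin N ⊕ Fin N) (Fin N ⊕ Fin N) ℝ)
    (hr : ∀ g : Matrix (Fin N ⊕ Fin N) (Fin N ⊕ Fin N) ℝ,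
      r g = (msqrt (g * gᵀ))⁻¹ * g) :
    (∀ g ∈ Matrix.symplecticGroup (Fin N) ℝ,
      r g * (r g)ᵀ = 1 ∧ r g ∈ Matrix.symplecticGroup (Fin N) ℝ) ∧
    (∀ u ∈ Matrix.symplecticGroup (Fin N) ℝ, u * uᵀ = 1 → r u = u) ∧
    (∀ g ∈ Matrix.symplecticGroup (Fin N) ℝ,
      ∀ u₁ ∈ Matrix.symplecticGroup (Fin N) ℝ,
        ∀ u₂ ∈ Matrix.symplecticGroup (Fin N) ℝ,
          u₁ * u₁ᵀ = 1 → u₂ * u₂ᵀ = 1 →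
          r (u₁ * g * u₂) = u₁ * r g * u₂) := by
  have hTT : ∀ g ∈ Matrix.symplecticGroup (Fin N) ℝ, (g * gᵀ).PosDef := by
    intro g hg
    have hgu : IsUnit g := (Matrix.isUnit_iff_isUnit_det g).2 (SymplecticGroup.symplectic_det hg)
    simpa using posDef_conj_real (A := 1) Matrix.PosDef.one hgu
  have key : ∀ g ∈ Matrix.symplecticGroup (Fin N) ℝ, ∃ S : Matrix (Fin N ⊕ Fin N) (Fin N ⊕ Fin N) ℝ,
      msqrt (g * gᵀ) = S ∧ S.PosDef ∧ S * S = g * gᵀ ∧ Sᵀ = S ∧ S * S⁻¹ = 1 ∧ S⁻¹ * S = 1 := by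
    intro g hg
    obtain ⟨h1, h2⟩ := hsqrt _ (hTT g hg)
    have hu : IsUnit (msqrt (g * gᵀ)).det := (Matrix.isUnit_iff_isUnit_det _).1 h1.isUnit
    refine ⟨_, rfl, h1, h2, ?_, Matrix.mul_nonsing_inv _ hu, Matrix.nonsing_inv_mul _ hu⟩
    have := h1.isHermitian.eq
    rwa [Matrix.conjTranspose_eq_transpose_of_trivial] at this
  refine ⟨?_, ?_, ?_⟩
  · intro g hg
    obtain ⟨S, hS, hp, hSS, hT, hi1, hi2⟩ := key g hg
    have hTi : (S⁻¹)ᵀ = S⁻¹ := by rw [Matrix.transpose_nonsing_inv, hT]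
    have hJJ : J (Fin N) ℝ * (J (Fin N) ℝ)ᵀ = 1 := by
      rw [Matrix.J_transpose, mul_neg, Matrix.J_squared, neg_neg]
    have hJJt : (J (Fin N) ℝ)ᵀ * J (Fin N) ℝ = 1 := mul_eq_one_comm.1 hJJ
    have hJu : IsUnit (J (Fin N) ℝ) := (Matrix.isUnit_iff_isUnit_det _).2 (Matrix.isUnit_det_J _ _)
    have hP : g * gᵀ ∈ Matrix.symplecticGroup (Fin N) ℝ :=
      mul_mem hg (SymplecticGroup.transpose_mem hg)
    have hPJ : (S * S) * J (Fin N) ℝ * (S * S) = J (Fin N) ℝ := by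
      have := SymplecticGroup.mem_iff.1 hP
      rwa [← hSS, Matrix.transpose_mul, hT] at this
    have hSeq : S = J (Fin N) ℝ * S⁻¹ * (J (Fin N) ℝ)ᵀ := by
      apply posDef_sqrt_unique hp (posDef_conj_real hp.inv hJu)
      generalize J (Fin N) ℝ = j at *
      generalize S⁻¹ = T at *
      calc S * S = S * S * j * (S * (S * T) * T) * jᵀ := by
            rw [hi1, mul_one, hi1, mul_one, mul_assoc, hJJ, mul_one]
        _ = (S * S * j * (S * S)) * T * T * jᵀ := by simp only [mul_assoc]
        _ = j * T * (jᵀ * j) * T * jᵀ := by rw [hPJ, hJJt, mul_one]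
        _ = _ := by simp only [mul_assoc]
    have hSi : S⁻¹ * J (Fin N) ℝ * S⁻¹ = J (Fin N) ℝ := by
      generalize J (Fin N) ℝ = j at *
      have h3 : S * j = j * S⁻¹ := by
        conv_lhs => rw [hSeq]
        rw [mul_assoc, hJJt, mul_one]
      rw [mul_assoc, ← h3, ← mul_assoc, hi2, one_mul]
    rw [hr, hS]
    constructor
    · rw [Matrix.transpose_mul, hTi]
      calc S⁻¹ * g * (gᵀ * S⁻¹) = S⁻¹ * (g * gᵀ) * S⁻¹ := by simp only [mul_assoc]
        _ = (S⁻¹ * S) * (S * S⁻¹) := by rw [← hSS]; simp only [mul_assoc]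
        _ = 1 := by rw [hi1, hi2, mul_one]
    · refine mul_mem ?_ hg
      rw [SymplecticGroup.mem_iff, hTi, hSi]
  · intro u hu huu
    obtain ⟨S, hS, hp, hSS, hT, hi1, hi2⟩ := key u hu
    have : S = 1 := posDef_sqrt_unique hp Matrix.PosDef.one (by rw [hSS, huu, mul_one])
    rw [hr, hS, this, inv_one, one_mul]
  · intro g hg u₁ h₁ u₂ h₂ o₁ o₂
    obtain ⟨S, hS, hp, hSS, hT, hi1, hi2⟩ := key g hg
    obtain ⟨R, hR, hpR, hRR, -, -, -⟩ := key (u₁ * g * u₂) (mul_mem (mul_mem h₁ hg) h₂)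
    have o₁t : u₁ᵀ * u₁ = 1 := mul_eq_one_comm.1 o₁
    have hu₁ : IsUnit u₁ := (Matrix.isUnit_iff_isUnit_det _).2 (SymplecticGroup.symplectic_det h₁)
    have hRS : R = u₁ * S * u₁ᵀ := by
      apply posDef_sqrt_unique hpR (posDef_conj_real hp hu₁)
      rw [hRR, Matrix.transpose_mul, Matrix.transpose_mul]
      calc u₁ * g * u₂ * (u₂ᵀ * (gᵀ * u₁ᵀ)) = u₁ * g * (u₂ * u₂ᵀ) * gᵀ * u₁ᵀ := by
            simp only [mul_assoc]
        _ = u₁ * (g * gᵀ) * u₁ᵀ := by rw [o₂, mul_one]; simp only [mul_assoc]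
        _ = u₁ * S * (u₁ᵀ * u₁) * S * u₁ᵀ := by rw [← hSS, o₁t, mul_one]; simp only [mul_assoc]
        _ = _ := by simp only [mul_assoc]
    have hRi : R⁻¹ = u₁ * S⁻¹ * u₁ᵀ := by
      apply Matrix.inv_eq_right_inv
      rw [hRS]
      calc u₁ * S * u₁ᵀ * (u₁ * S⁻¹ * u₁ᵀ) = u₁ * S * (u₁ᵀ * u₁) * S⁻¹ * u₁ᵀ := by
            simp only [mul_assoc]
        _ = u₁ * (S * S⁻¹) * u₁ᵀ := by rw [o₁t, mul_one]; simp only [mul_assoc]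
        _ = 1 := by rw [hi1, mul_one, o₁]
    rw [hr, hr, hS, hR, hRi]
    calc u₁ * S⁻¹ * u₁ᵀ * (u₁ * g * u₂) = u₁ * S⁻¹ * (u₁ᵀ * u₁) * g * u₂ := by
          simp only [mul_assoc]
      _ = _ := by rw [o₁t, mul_one]; simp only [mul_assoc]
end

section
/- Let 𝓕 be a co-filter on a set S and 𝓖 a co-filter on a set T. Then hom(𝓕,𝓖) is a co-filter on S × T; that is: (i) if U ∈ hom(𝓕,𝓖) and V ⊆ U, then V ∈ hom(𝓕,𝓖); (ii) if U, V ∈ hom(𝓕,𝓖), then U ∪ V ∈ hom(𝓕,𝓖). -/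
/-- A co-filter on a set `S`: a collection of subsets closed under passing to subsets
and under binary unions. -/
def IsCofilter {S : Type*} (F : Set (Set S)) : Prop :=
  (∀ A ∈ F, ∀ B : Set S, B ⊆ A → B ∈ F) ∧ ∀ A ∈ F, ∀ B ∈ F, A ∪ B ∈ F

/-- The co-filter `hom(𝓕, 𝓖)` on `S × T`: subsets `U` such that `U ∩ (R × {t})` is finite
for all `t ∈ T`, `R ∈ 𝓕`, and such that `H_R(U) = {t | U ∩ (R × {t}) ≠ ∅} ∈ 𝓖` for `R ∈ 𝓕`. -/
def cofilterHom {S T : Type*} (F : Set (Set S)) (G : Set (Set T)) :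
    Set (Set (S × T)) :=
  {U | (∀ t : T, ∀ R ∈ F, (U ∩ R ×ˢ ({t} : Set T)).Finite) ∧
       ∀ R ∈ F, {t : T | (U ∩ R ×ˢ ({t} : Set T)).Nonempty} ∈ G}

/-- If `𝓕` and `𝓖` are co-filters, then so is `hom(𝓕, 𝓖)`. -/
theorem cofilterHom_isCofilter {S T : Type*} (F : Set (Set S)) (G : Set (Set T))
    (hF : IsCofilter F) (hG : IsCofilter G) :
    IsCofilter (cofilterHom F G) := by
  refine ⟨fun U hU V hVU => ⟨fun t R hR => ?_, fun R hR => ?_⟩,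
    fun U hU V hV => ⟨fun t R hR => ?_, fun R hR => ?_⟩⟩
  · exact (hU.1 t R hR).subset (Set.inter_subset_inter_left _ hVU)
  · exact hG.1 _ (hU.2 R hR) _ fun t ht => ht.mono (Set.inter_subset_inter_left _ hVU)
  · rw [Set.union_inter_distrib_right]
    exact (hU.1 t R hR).union (hV.1 t R hR)
  · refine hG.1 _ (hG.2 _ (hU.2 R hR) _ (hV.2 R hR)) _ fun t ht => ?_
    obtain ⟨x, hx | hx, hxR⟩ := ht
    · exact Or.inl ⟨x, hx, hxR⟩
    · exact Or.inr ⟨x, hx, hxR⟩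
end

section
/- Let 𝓕, 𝓖, 𝓗 be co-filters on sets S, T, U respectively. Let Φ ⊆ S × T with Φ ∈ hom(𝓕,𝓖) and Ψ ⊆ T × U with Ψ ∈ hom(𝓖,𝓗). Then the composite relation Ψ ∘ Φ := {(s, u) ∈ S × U : ∃ t ∈ T, (s, t) ∈ Φ and (t, u) ∈ Ψ} belongs to hom(𝓕,𝓗). -/
/-- Composition of relations supported on `hom`-co-filters lands in the `hom`-co-filter:
if `Φ ∈ hom(𝓕, 𝓖)` and `Ψ ∈ hom(𝓖, 𝓗)` then `Ψ ∘ Φ ∈ hom(𝓕, 𝓗)`. -/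
theorem cofilterHom_comp {S T U : Type*}
    (F : Set (Set S)) (G : Set (Set T)) (H : Set (Set U))
    (hF : IsCofilter F) (hG : IsCofilter G) (hH : IsCofilter H)
    (Φ : Set (S × T)) (hΦ : Φ ∈ cofilterHom F G)
    (Ψ : Set (T × U)) (hΨ : Ψ ∈ cofilterHom G H) :
    {su : S × U | ∃ t : T, (su.1, t) ∈ Φ ∧ (t, su.2) ∈ Ψ} ∈ cofilterHom F H := by
  obtain ⟨hΦ1, hΦ2⟩ := hΦ
  obtain ⟨hΨ1, hΨ2⟩ := hΨ
  refine ⟨fun u R hR => ?_, fun R hR => ?_⟩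
  · have hfin := hΨ1 u _ (hΦ2 R hR)
    refine (hfin.biUnion (t := fun p => (fun q : S × T => (q.1, u)) ''
      (Φ ∩ R ×ˢ ({p.1} : Set T))) (fun p _ => (hΦ1 p.1 R hR).image _)).subset ?_
    rintro ⟨s, u'⟩ ⟨⟨t, h1, h2⟩, hs, hu⟩
    obtain rfl : u' = u := hu
    exact Set.mem_biUnion (x := (t, u')) ⟨h2, ⟨(s, t), h1, hs, rfl⟩, rfl⟩
      ⟨(s, t), ⟨h1, hs, rfl⟩, rfl⟩
  · refine hH.1 _ (hΨ2 _ (hΦ2 R hR)) _ ?_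
    rintro u ⟨⟨s, u'⟩, ⟨t, h1, h2⟩, hs, hu⟩
    obtain rfl : u' = u := hu
    exact ⟨(t, u'), h2, ⟨(s, t), h1, hs, rfl⟩, rfl⟩
end

section
/- Let S, T be sets with co-filters 𝓕 on S and 𝓖 on T. Let (A_s)_{s∈S} and (B_t)_{t∈T} be families of abelian groups, and let φ be a family of group homomorphisms φ_{s,t} : A_s → B_t whose support {(s,t) ∈ S × T : φ_{s,t} ≠ 0} belongs to hom(𝓕,𝓖). Let a = (a_s) ∈ ∏_s A_s with support {s : a_s ≠ 0} ∈ 𝓕. Then: (i) for every t ∈ T, the set {s ∈ S : φ_{s,t}(a_s) ≠ 0} is finite, so b_t := Σ_{s} φ_{s,t}(a_s) is a well-defined element of B_t; (ii) the support {t ∈ T : b_t ≠ 0} of the resulting family b belongs to 𝓖. Hence φ maps the restricted product ∏^𝓕 A_s into the restricted product ∏^𝓖 B_t. -/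
/-- A family of homomorphisms supported on a set in `hom(𝓕, 𝓖)` maps the restricted
product `∏^𝓕 A_s` into the restricted product `∏^𝓖 B_t`: the sums defining the image
are finite, and the support of the image lies in `𝓖`. -/
theorem cofilterHom_apply_restrictedProduct {S T : Type*}
    (F : Set (Set S)) (G : Set (Set T)) (hF : IsCofilter F) (hG : IsCofilter G)
    (A : S → Type*) [∀ s, AddCommGroup (A s)]
    (B : T → Type*) [∀ t, AddCommGroup (B t)]
    (φ : ∀ s t, A s →+ B t)
    (hφ : {st : S × T | φ st.1 st.2 ≠ 0} ∈ cofilterHom F G)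
    (a : ∀ s, A s) (ha : {s : S | a s ≠ 0} ∈ F) :
    (∀ t : T, ({s : S | φ s t (a s) ≠ 0}).Finite) ∧
    {t : T | (∑ᶠ s : S, φ s t (a s)) ≠ 0} ∈ G := by
  have key : ∀ s t, φ s t (a s) ≠ 0 → (s, t) ∈ {st : S × T | φ st.1 st.2 ≠ 0} ∩
      {s : S | a s ≠ 0} ×ˢ ({t} : Set T) := by
    intro s t h
    refine ⟨fun h0 => h ?_, fun h0 => h ?_, rfl⟩
    · have h1 : φ s t = 0 := h0
      rw [h1]; rfl
    · have h1 : a s = 0 := h0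
      rw [h1, map_zero]
  refine ⟨fun t => ?_, ?_⟩
  · exact ((hφ.1 t _ ha).image Prod.fst).subset fun s hs => ⟨(s, t), key s t hs, rfl⟩
  · refine hG.1 _ (hφ.2 _ ha) _ fun t ht => ?_
    by_contra hne
    refine ht (finsum_eq_zero_of_forall_eq_zero fun s => ?_)
    by_contra h
    exact hne ⟨(s, t), key s t h⟩
end
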